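/- arXiv:2303.13461 — 2 statements merged into one kernel-verified Lean document; each statement's English description precedes it below -/
import Mathlib

section
/- The Ricci tensor Ric of a 2n-dimensional Kähler base and the Ricci tensor R̄ic of its Sasakian lift satisfy R̄ic(X^L, Y^L) = Ric(X,Y) − 2g(X,Y) for all vector fields X, Y on the base; consequently the scalar curvatures are related by s̄ = s − 2n, where s is the scalar curvature of the base and s̄ that of the lift. -/
/-!
Abstract framework for (local) differential geometry, following the standard
algebraic formulation: smooth functions form a commutative `ℝ`-algebra `F`,
vector fields form an `F`-module `V` equipped with a Lie bracket and a
directional derivative (derivation) action on functions.  Metrics, connections,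
curvature, Ricci tensors (via orthonormal frames), Lie derivatives, exterior
derivatives, almost contact metric / Sasakian structures, Kähler structures,
`D_{α,β}`-homotheties, twisted `η`-Ricci solitons, and the Sasakian lift of a
Kähler base are all expressed in this language.
-/

/-- The calculus of vector fields on a manifold: a Lie bracket and a
directional-derivative action of vector fields on functions, with the usual
rules. -/
structure VectorCalculus (F : Type*) (V : Type*) [CommRing F] [Algebra ℝ F]
    [AddCommGroup V] [Module F V] where
  bracket : V → V → V
  deriv : V → F → F
  bracket_antisymm : ∀ X Y, bracket X Y = - bracket Y X
  bracket_add_left : ∀ X Y Z, bracket (X + Y) Z = bracket X Z + bracket Y Z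
  bracket_smul_left : ∀ (f : F) (X Y : V),
      bracket (f • X) Y = f • bracket X Y - deriv Y f • X
  jacobi : ∀ X Y Z,
      bracket X (bracket Y Z) + bracket Y (bracket Z X) + bracket Z (bracket X Y) = 0
  deriv_add : ∀ (X : V) (f g : F), deriv X (f + g) = deriv X f + deriv X g
  deriv_mul : ∀ (X : V) (f g : F), deriv X (f * g) = deriv X f * g + f * deriv X g
  deriv_add_left : ∀ (X Y : V) (f : F), deriv (X + Y) f = deriv X f + deriv Y f
  deriv_smul_left : ∀ (f : F) (X : V) (h : F), deriv (f • X) h = f * deriv X h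
  deriv_const : ∀ (X : V) (r : ℝ), deriv X (algebraMap ℝ F r) = 0
  deriv_bracket : ∀ (X Y : V) (f : F),
      deriv (bracket X Y) f = deriv X (deriv Y f) - deriv Y (deriv X f)

section Defs

variable {F : Type*} {V : Type*} [CommRing F] [Algebra ℝ F]
  [AddCommGroup V] [Module F V]

/-- A (pseudo-)Riemannian metric: a symmetric `F`-bilinear form on vector fields. -/
structure IsMetric (g : V → V → F) : Prop where
  symm : ∀ X Y, g X Y = g Y X
  add_left : ∀ X Y Z, g (X + Y) Z = g X Z + g Y Z
  smul_left : ∀ (f : F) (X Y : V), g (f • X) Y = f * g X Y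

/-- `nabla` is the Levi-Civita connection of the metric `g`: an affine,
torsion-free, metric-compatible connection. -/
structure IsLeviCivita (C : VectorCalculus F V) (g : V → V → F)
    (nabla : V → V → V) : Prop where
  add_left : ∀ X Y Z, nabla (X + Y) Z = nabla X Z + nabla Y Z
  smul_left : ∀ (f : F) (X Y : V), nabla (f • X) Y = f • nabla X Y
  add_right : ∀ X Y Z, nabla X (Y + Z) = nabla X Y + nabla X Z
  leibniz : ∀ (X : V) (f : F) (Y : V),
      nabla X (f • Y) = C.deriv X f • Y + f • nabla X Y
  torsion_free : ∀ X Y, nabla X Y - nabla Y X = C.bracket X Y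
  compat : ∀ X Y Z, C.deriv X (g Y Z) = g (nabla X Y) Z + g Y (nabla X Z)

/-- Riemann curvature operator `R_{X Y} Z = ∇_X ∇_Y Z - ∇_Y ∇_X Z - ∇_{[X,Y]} Z`. -/
def curv (C : VectorCalculus F V) (nabla : V → V → V) (X Y Z : V) : V :=
  nabla X (nabla Y Z) - nabla Y (nabla X Z) - nabla (C.bracket X Y) Z

/-- An orthonormal spanning frame for the metric `g`. -/
def IsOrthFrame (g : V → V → F) {m : ℕ} (E : Fin m → V) : Prop :=
  (∀ i j, g (E i) (E j) = if i = j then (1 : F) else 0) ∧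
  (∀ X : V, X = ∑ i, g X (E i) • E i)

/-- Ricci tensor, computed as the trace of the curvature in the orthonormal
frame `E`:  `Ric(Y,Z) = ∑ᵢ g(R_{Eᵢ Y} Z, Eᵢ)`. -/
def ricci (C : VectorCalculus F V) (nabla : V → V → V) {m : ℕ} (E : Fin m → V)
    (g : V → V → F) (Y Z : V) : F :=
  ∑ i, g (curv C nabla (E i) Y Z) (E i)

/-- Scalar curvature: trace of the Ricci tensor in the frame `E`. -/
def scalarCurv (C : VectorCalculus F V) (nabla : V → V → V) {m : ℕ}
    (E : Fin m → V) (g : V → V → F) : F :=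
  ∑ i, ricci C nabla E g (E i) (E i)

/-- Lie derivative of a metric (symmetric 2-tensor):
`(L_X g)(Y,Z) = X g(Y,Z) - g([X,Y],Z) - g(Y,[X,Z])`. -/
def lieDerivMetric (C : VectorCalculus F V) (X : V) (g : V → V → F) (Y Z : V) : F :=
  C.deriv X (g Y Z) - g (C.bracket X Y) Z - g Y (C.bracket X Z)

/-- Lie derivative of a 1-form: `(L_X η)(Y) = X η(Y) - η([X,Y])`. -/
def lieDerivOneForm (C : VectorCalculus F V) (X : V) (eta : V → F) (Y : V) : F :=
  C.deriv X (eta Y) - eta (C.bracket X Y)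

/-- Lie derivative of a (1,1)-tensor field: `(L_X φ)(Y) = [X, φY] - φ[X,Y]`. -/
def lieDerivEndo (C : VectorCalculus F V) (X : V) (phi : V → V) (Y : V) : V :=
  C.bracket X (phi Y) - phi (C.bracket X Y)

/-- Lie derivative of a 2-form. -/
def lieDerivTwoForm (C : VectorCalculus F V) (X : V) (Th : V → V → F) (Y Z : V) : F :=
  C.deriv X (Th Y Z) - Th (C.bracket X Y) Z - Th Y (C.bracket X Z)

/-- Exterior derivative of a 1-form (Blair's convention, with the factor `1/2`):
`dη(X,Y) = (1/2)(X η(Y) - Y η(X) - η([X,Y]))`. -/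
noncomputable def extDerivOneForm (C : VectorCalculus F V) (eta : V → F) (X Y : V) : F :=
  (1/2 : ℝ) • (C.deriv X (eta Y) - C.deriv Y (eta X) - eta (C.bracket X Y))

/-- A 1-form is closed iff `X a(Y) - Y a(X) - a([X,Y]) = 0` for all `X, Y`. -/
def IsClosedOneForm (C : VectorCalculus F V) (a : V → F) : Prop :=
  ∀ X Y, C.deriv X (a Y) - C.deriv Y (a X) - a (C.bracket X Y) = 0

/-- A 2-form is closed iff its exterior derivative vanishes. -/
def IsClosedTwoForm (C : VectorCalculus F V) (Th : V → V → F) : Prop :=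
  ∀ X Y Z,
    C.deriv X (Th Y Z) - C.deriv Y (Th X Z) + C.deriv Z (Th X Y)
      - Th (C.bracket X Y) Z + Th (C.bracket X Z) Y - Th (C.bracket Y Z) X = 0

/-- Nijenhuis torsion of a (1,1)-tensor field `S`:
`N_S(X,Y) = S²[X,Y] + [SX,SY] - S([SX,Y]) - S([X,SY])`. -/
def nijenhuis (C : VectorCalculus F V) (S : V → V) (X Y : V) : V :=
  S (S (C.bracket X Y)) + C.bracket (S X) (S Y)
    - S (C.bracket (S X) Y) - S (C.bracket X (S Y))

/-- An almost contact metric structure `(φ, ξ, η, g)`. -/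
structure IsAlmostContactMetric (phi : V → V) (xi : V) (eta : V → F)
    (g : V → V → F) : Prop where
  metric : IsMetric g
  phi_add : ∀ X Y, phi (X + Y) = phi X + phi Y
  phi_smul : ∀ (f : F) (X : V), phi (f • X) = f • phi X
  eta_add : ∀ X Y, eta (X + Y) = eta X + eta Y
  eta_smul : ∀ (f : F) (X : V), eta (f • X) = f * eta X
  phi_sq : ∀ X, phi (phi X) = -X + eta X • xi
  eta_xi : eta xi = 1
  compat : ∀ X Y, g (phi X) (phi Y) = g X Y - eta X * eta Y

/-- A Sasakian structure: an almost contact metric structure whose Levi-Civita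
connection `nabla` satisfies `(∇_X φ)Y = g(X,Y) ξ - η(Y) X`. -/
def IsSasakianWith (C : VectorCalculus F V) (phi : V → V) (xi : V) (eta : V → F)
    (g : V → V → F) (nabla : V → V → V) : Prop :=
  IsAlmostContactMetric phi xi eta g ∧ IsLeviCivita C g nabla ∧
    ∀ X Y, nabla X (phi Y) - phi (nabla X Y) = g X Y • xi - eta Y • X

/-- Symmetric tensor product of two 1-forms:
`(a ⊙ b)(Y,Z) = (1/2)(a(Y) b(Z) + a(Z) b(Y))`. -/
noncomputable def symProd (a b : V → F) (Y Z : V) : F := (1/2 : ℝ) • (a Y * b Z + a Z * b Y)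

/-- Twisted `η`-Ricci soliton with data `(X, λ, C₁, C₂)`:
`η(X) = 0` and `Ric + (1/2) L_X g = λ g + 2 C₁ (L_X η) ⊙ η + C₂ η ⊗ η`. -/
def IsTwistedEtaRicciSoliton (C : VectorCalculus F V) (g : V → V → F)
    (eta : V → F) (Ric : V → V → F) (X : V) (lam C1 C2 : ℝ) : Prop :=
  eta X = 0 ∧
  ∀ Y Z, Ric Y Z + (1/2 : ℝ) • lieDerivMetric C X g Y Z =
    lam • g Y Z + (2 * C1) • symProd (lieDerivOneForm C X eta) eta Y Z
      + C2 • (eta Y * eta Z)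

/-- A Kähler structure `(J, g)` with Levi-Civita connection `nabla`. -/
structure IsKaehler (C : VectorCalculus F V) (J : V → V) (g : V → V → F)
    (nabla : V → V → V) : Prop where
  metric : IsMetric g
  lc : IsLeviCivita C g nabla
  J_add : ∀ X Y, J (X + Y) = J X + J Y
  J_smul : ∀ (f : F) (X : V), J (f • X) = f • J X
  J_sq : ∀ X, J (J X) = -X
  hermitian : ∀ X Y, g (J X) (J Y) = g X Y
  parallel : ∀ X Y, nabla X (J Y) = J (nabla X Y)

/-- The metric of the `D_{α,β}`-homothety: `g' = α g + (β² - α) η ⊗ η`. -/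
def dHomMetric (g : V → V → F) (eta : V → F) (α β : ℝ) (X Y : V) : F :=
  α • g X Y + (β ^ 2 - α) • (eta X * eta Y)

/-- The 1-form of the `D_{α,β}`-homothety: `η' = β η`. -/
def dHomEta (eta : V → F) (β : ℝ) (X : V) : F := β • eta X

end Defs

section DefsR

variable {F : Type*} {V : Type*} [CommRing F] [Algebra ℝ F]
  [AddCommGroup V] [Module F V] [Module ℝ V] [IsScalarTower ℝ F V]

/-- The Reeb field of the `D_{α,β}`-homothety: `ξ' = (1/β) ξ`. -/
noncomputable def dHomXi (xi : V) (β : ℝ) : V := β⁻¹ • xi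

/-- A `c`-Sasakian structure (`c` a real constant): an almost contact metric
structure whose Levi-Civita connection satisfies
`(∇_X φ)Y = c (g(X,Y) ξ - η(Y) X)`. -/
def IsCSasakianWith (C : VectorCalculus F V) (phi : V → V) (xi : V)
    (eta : V → F) (g : V → V → F) (nabla : V → V → V) (c : ℝ) : Prop :=
  IsAlmostContactMetric phi xi eta g ∧ IsLeviCivita C g nabla ∧
    ∀ X Y, nabla X (phi Y) - phi (nabla X Y) = c • (g X Y • xi - eta Y • X)

end DefsR

/-- The Sasakian lift of a Kähler base `(N, J, g)` to `M = ℝ × N`, presented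
axiomatically:  `liftF` is the pullback of functions along `π₂`, `liftV` is the
lift of vector fields `X ↦ X^L = X - (τ(X)∘π₂) ξ`, `ξ = ∂_t`, `η = dt + π₂*τ`,
`φ X^L = (JX)^L`, `φ ξ = 0`, `g^L = η ⊗ η + π₂* g`.  The structure fields
record exactly the identities satisfied by this construction. -/
structure SasakianLiftData
    {Fb : Type*} {Vb : Type*} [CommRing Fb] [Algebra ℝ Fb]
    [AddCommGroup Vb] [Module Fb Vb]
    {Fm : Type*} {Vm : Type*} [CommRing Fm] [Algebra ℝ Fm]
    [AddCommGroup Vm] [Module Fm Vm]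
    (Cb : VectorCalculus Fb Vb) (Cm : VectorCalculus Fm Vm)
    (J : Vb → Vb) (gb : Vb → Vb → Fb) where
  liftF : Fb →ₐ[ℝ] Fm
  liftV : Vb → Vm
  xi : Vm
  eta : Vm → Fm
  phi : Vm → Vm
  gL : Vm → Vm → Fm
  liftV_add : ∀ X Y, liftV (X + Y) = liftV X + liftV Y
  liftV_smul : ∀ (f : Fb) (X : Vb), liftV (f • X) = liftF f • liftV X
  eta_add : ∀ W W', eta (W + W') = eta W + eta W'
  eta_smul : ∀ (f : Fm) (W : Vm), eta (f • W) = f * eta W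
  phi_add : ∀ W W', phi (W + W') = phi W + phi W'
  phi_smul : ∀ (f : Fm) (W : Vm), phi (f • W) = f • phi W
  gL_metric : IsMetric gL
  eta_xi : eta xi = 1
  eta_lift : ∀ X, eta (liftV X) = 0
  phi_lift : ∀ X, phi (liftV X) = liftV (J X)
  phi_xi : phi xi = 0
  gL_lift : ∀ X Y, gL (liftV X) (liftV Y) = liftF (gb X Y)
  gL_xi : ∀ W, gL xi W = eta W
  bracket_lift : ∀ X Y, Cm.bracket (liftV X) (liftV Y)
      = liftV (Cb.bracket X Y) - ((2 : Fm) * liftF (gb X (J Y))) • xi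
  bracket_xi_lift : ∀ X, Cm.bracket xi (liftV X) = 0
  deriv_lift : ∀ (X : Vb) (f : Fb),
      Cm.deriv (liftV X) (liftF f) = liftF (Cb.deriv X f)
  deriv_xi : ∀ f : Fb, Cm.deriv xi (liftF f) = 0
  spanning : ∀ W : Vm, ∃ (k : ℕ) (a : Fin k → Fm) (X : Fin k → Vb),
      W = eta W • xi + ∑ i, a i • liftV (X i)


section Helpers

variable {F : Type*} {V : Type*} [CommRing F] [Algebra ℝ F]
  [AddCommGroup V] [Module F V]

theorem half_cancel {a b : F} (h : (2 : F) * a = 2 * b) : a = b := by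
  have h2 : algebraMap ℝ F (1/2) * (2 : F) = 1 := by
    have : (2 : F) = algebraMap ℝ F 2 := (map_ofNat (algebraMap ℝ F) 2).symm
    rw [this, ← map_mul]; norm_num
  calc a = algebraMap ℝ F (1/2) * 2 * a := by rw [h2, one_mul]
    _ = algebraMap ℝ F (1/2) * 2 * b := by rw [mul_assoc, h, mul_assoc]
    _ = b := by rw [h2, one_mul]

section metric
variable {g : V → V → F} (hg : IsMetric g)

theorem met_add_right (hg : IsMetric g) (X Y Z : V) : g X (Y + Z) = g X Y + g X Z := by
  rw [hg.symm, hg.add_left, hg.symm Y, hg.symm Z]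

theorem met_smul_right (hg : IsMetric g) (f : F) (X Y : V) : g X (f • Y) = f * g X Y := by
  rw [hg.symm, hg.smul_left, hg.symm Y]

theorem met_neg_left (hg : IsMetric g) (X Y : V) : g (-X) Y = - g X Y := by
  have := hg.smul_left (-1) X Y
  simpa using this

theorem met_neg_right (hg : IsMetric g) (X Y : V) : g X (-Y) = - g X Y := by
  rw [hg.symm, met_neg_left hg, hg.symm]

theorem met_sub_left (hg : IsMetric g) (X Y Z : V) : g (X - Y) Z = g X Z - g Y Z := by
  rw [sub_eq_add_neg, hg.add_left, met_neg_left hg, sub_eq_add_neg]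

theorem met_sub_right (hg : IsMetric g) (X Y Z : V) : g X (Y - Z) = g X Y - g X Z := by
  rw [hg.symm, met_sub_left hg, hg.symm Y, hg.symm Z]

theorem met_zero_left (hg : IsMetric g) (Y : V) : g 0 Y = 0 := by
  have := hg.smul_left 0 0 Y
  simpa using this

theorem met_zero_right (hg : IsMetric g) (Y : V) : g Y 0 = 0 := by
  rw [hg.symm, met_zero_left hg]

theorem sum_of_add {A B ι : Type*} [AddCommGroup A] [AddCommGroup B] (b : A → B)
    (h : ∀ X Y, b (X + Y) = b X + b Y) (s : Finset ι) (v : ι → A) :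
    b (∑ i ∈ s, v i) = ∑ i ∈ s, b (v i) :=
  map_sum (AddMonoidHom.mk' b h) v s

/-- Independence of the trace from the frame. -/
theorem trace_indep {ι κ : Type*} [Fintype ι] [Fintype κ] (hg : IsMetric g)
    (E : ι → V) (e : κ → V)
    (hE : ∀ X : V, X = ∑ i, g X (E i) • E i) (he : ∀ X : V, X = ∑ i, g X (e i) • e i)
    (B : V → V → F)
    (h1 : ∀ X Y Z, B (X + Y) Z = B X Z + B Y Z) (h2 : ∀ (f : F) X Y, B (f • X) Y = f * B X Y)
    (h3 : ∀ X Y Z, B X (Y + Z) = B X Y + B X Z) (h4 : ∀ (f : F) X Y, B X (f • Y) = f * B X Y) :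
    ∑ i, B (E i) (E i) = ∑ a, B (e a) (e a) := by
  have hl : ∀ i, B (E i) (E i) = ∑ a, g (E i) (e a) * B (e a) (E i) := by
    intro i
    have : B (E i) (E i) = B (∑ a, g (E i) (e a) • e a) (E i) := by rw [← he (E i)]
    rw [this, sum_of_add (fun X => B X (E i)) (fun X Y => h1 X Y _)]
    simp only [h2]
  have hr : ∀ a, B (e a) (e a) = ∑ i, g (e a) (E i) * B (e a) (E i) := by
    intro a
    have : B (e a) (e a) = B (e a) (∑ i, g (e a) (E i) • E i) := by rw [← hE (e a)]
    rw [this, sum_of_add (fun X => B (e a) X) (fun X Y => h3 _ X Y)]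
    simp only [h4]
  simp only [hl, hr]
  rw [Finset.sum_comm]
  simp only [hg.symm (e _) (E _)]

end metric

section conn
variable {C : VectorCalculus F V} {g : V → V → F} {D : V → V → V}

theorem lc_neg_left (h : IsLeviCivita C g D) (X Y : V) : D (-X) Y = - D X Y := by
  have := h.smul_left (-1) X Y
  simpa using this

theorem lc_zero_left (h : IsLeviCivita C g D) (Y : V) : D 0 Y = 0 := by
  have := h.smul_left 0 0 Y
  simpa using this

theorem lc_sub_left (h : IsLeviCivita C g D) (X Y Z : V) : D (X - Y) Z = D X Z - D Y Z := by
  rw [sub_eq_add_neg, h.add_left, lc_neg_left h, sub_eq_add_neg]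

theorem lc_zero_right (h : IsLeviCivita C g D) (X : V) : D X 0 = 0 := by
  have := h.add_right X 0 0
  simpa using this

theorem lc_neg_right (h : IsLeviCivita C g D) (X Y : V) : D X (-Y) = - D X Y := by
  have := h.add_right X Y (-Y)
  rw [add_neg_cancel, lc_zero_right h] at this
  exact (neg_eq_of_add_eq_zero_right this.symm).symm

theorem lc_sub_right (h : IsLeviCivita C g D) (X Y Z : V) : D X (Y - Z) = D X Y - D X Z := by
  rw [sub_eq_add_neg, h.add_right, lc_neg_right h, sub_eq_add_neg]

theorem curv_swap (h : IsLeviCivita C g D) (X Y Z : V) :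
    curv C D X Y Z = - curv C D Y X Z := by
  unfold curv
  rw [C.bracket_antisymm X Y, lc_neg_left h]
  abel

theorem curv_add1 (h : IsLeviCivita C g D) (X X' Y Z : V) :
    curv C D (X + X') Y Z = curv C D X Y Z + curv C D X' Y Z := by
  unfold curv
  simp only [C.bracket_add_left, h.add_left, h.add_right]
  abel

theorem curv_smul1 (h : IsLeviCivita C g D) (f : F) (X Y Z : V) :
    curv C D (f • X) Y Z = f • curv C D X Y Z := by
  unfold curv
  simp only [C.bracket_smul_left, h.smul_left, h.leibniz, lc_sub_left h]
  module

theorem curv_add2 (h : IsLeviCivita C g D) (X Y Y' Z : V) :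
    curv C D X (Y + Y') Z = curv C D X Y Z + curv C D X Y' Z := by
  rw [curv_swap h, curv_add1 h, curv_swap h X Y, curv_swap h X Y']
  abel

theorem curv_smul2 (h : IsLeviCivita C g D) (f : F) (X Y Z : V) :
    curv C D X (f • Y) Z = f • curv C D X Y Z := by
  rw [curv_swap h, curv_smul1 h, curv_swap h X Y, smul_neg]

theorem curv_add3 (h : IsLeviCivita C g D) (X Y Z Z' : V) :
    curv C D X Y (Z + Z') = curv C D X Y Z + curv C D X Y Z' := by
  unfold curv
  simp only [h.add_right]
  abel

theorem curv_smul3 (h : IsLeviCivita C g D) (f : F) (X Y Z : V) :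
    curv C D X Y (f • Z) = f • curv C D X Y Z := by
  unfold curv
  simp only [h.leibniz, h.add_right, C.deriv_bracket]
  module

theorem koszul (hg : IsMetric g) (h : IsLeviCivita C g D) (X Y Z : V) :
    2 * g (D X Y) Z = C.deriv X (g Y Z) + C.deriv Y (g X Z) - C.deriv Z (g X Y)
      + g (C.bracket X Y) Z - g (C.bracket X Z) Y - g (C.bracket Y Z) X := by
  simp only [h.compat, ← h.torsion_free, met_sub_left hg]
  rw [hg.symm Y (D X Z), hg.symm X (D Y Z), hg.symm X (D Z Y)]
  ring

end conn

theorem deriv_zero' (C : VectorCalculus F V) (X : V) : C.deriv X 0 = 0 := by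
  simpa using C.deriv_const X 0

theorem deriv_one' (C : VectorCalculus F V) (X : V) : C.deriv X 1 = 0 := by
  simpa using C.deriv_const X 1

end Helpers

section LiftHelpers

variable {Fb Vb Fm Vm : Type*} [CommRing Fb] [Algebra ℝ Fb]
    [AddCommGroup Vb] [Module Fb Vb]
    [CommRing Fm] [Algebra ℝ Fm] [AddCommGroup Vm] [Module Fm Vm]
    {Cb : VectorCalculus Fb Vb} {Cm : VectorCalculus Fm Vm}
    {J : Vb → Vb} {gb : Vb → Vb → Fb} {nablab : Vb → Vb → Vb}

theorem lift_neg (L : SasakianLiftData Cb Cm J gb) (X : Vb) : L.liftV (-X) = - L.liftV X :=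
  map_neg (AddMonoidHom.mk' L.liftV L.liftV_add) X

theorem lift_sub (L : SasakianLiftData Cb Cm J gb) (X Y : Vb) :
    L.liftV (X - Y) = L.liftV X - L.liftV Y :=
  map_sub (AddMonoidHom.mk' L.liftV L.liftV_add) X Y

theorem gL_lift_xi (L : SasakianLiftData Cb Cm J gb) (X : Vb) :
    L.gL (L.liftV X) L.xi = 0 := by
  rw [L.gL_metric.symm, L.gL_xi, L.eta_lift]

theorem gL_xi_lift (L : SasakianLiftData Cb Cm J gb) (X : Vb) :
    L.gL L.xi (L.liftV X) = 0 := by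
  rw [L.gL_xi, L.eta_lift]

theorem gL_xi_xi (L : SasakianLiftData Cb Cm J gb) : L.gL L.xi L.xi = 1 := by
  rw [L.gL_xi, L.eta_xi]

theorem bracket_lift_xi (L : SasakianLiftData Cb Cm J gb) (X : Vb) :
    Cm.bracket (L.liftV X) L.xi = 0 := by
  rw [Cm.bracket_antisymm, L.bracket_xi_lift, neg_zero]

theorem J_skew (hK : IsKaehler Cb J gb nablab) (X Y : Vb) : gb (J X) Y = - gb X (J Y) := by
  have := hK.hermitian X (J Y)
  rw [hK.J_sq, met_neg_right hK.metric] at this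
  rw [← this, neg_neg]

theorem J_self (hK : IsKaehler Cb J gb nablab) (X : Vb) : gb (J X) X = 0 := by
  have h := J_skew hK X X
  rw [hK.metric.symm X] at h
  apply half_cancel
  linear_combination h

/-- The lifted frame spans. -/
theorem lift_frame (L : SasakianLiftData Cb Cm J gb) {m : ℕ} (Eb : Fin m → Vb)
    (hEb : ∀ X : Vb, X = ∑ i, gb X (Eb i) • Eb i) (W : Vm) :
    W = L.gL W L.xi • L.xi + ∑ i, L.gL W (L.liftV (Eb i)) • L.liftV (Eb i) := by
  let P : Vm → Vm := fun W =>
    L.gL W L.xi • L.xi + ∑ i, L.gL W (L.liftV (Eb i)) • L.liftV (Eb i)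
  have hadd : ∀ W W', P (W + W') = P W + P W' := by
    intro W W'
    simp only [P, L.gL_metric.add_left, add_smul, Finset.sum_add_distrib]
    abel
  have hsmul : ∀ (f : Fm) W, P (f • W) = f • P W := by
    intro f W
    simp only [P, L.gL_metric.smul_left, mul_smul, smul_add, Finset.smul_sum]
  have hxi : P L.xi = L.xi := by
    simp [P, gL_xi_xi, gL_xi_lift]
  have hlift : ∀ X, P (L.liftV X) = L.liftV X := by
    intro X
    simp only [P, gL_lift_xi, L.gL_lift, zero_smul, zero_add, ← L.liftV_smul]
    rw [← sum_of_add L.liftV L.liftV_add, ← hEb X]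
  change W = P W
  obtain ⟨k, a, X, hW⟩ := L.spanning W
  rw [hW, hadd, hsmul, hxi, sum_of_add P hadd]
  simp only [hsmul, hlift]

theorem lift_ext (L : SasakianLiftData Cb Cm J gb) {m : ℕ} (Eb : Fin m → Vb)
    (hEb : ∀ X : Vb, X = ∑ i, gb X (Eb i) • Eb i) (W W' : Vm)
    (h0 : L.gL W L.xi = L.gL W' L.xi)
    (h1 : ∀ X, L.gL W (L.liftV X) = L.gL W' (L.liftV X)) : W = W' := by
  rw [lift_frame L Eb hEb W, lift_frame L Eb hEb W']
  simp only [h0, h1]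

variable {nablaM : Vm → Vm → Vm}

theorem nabla_lift_lift (hK : IsKaehler Cb J gb nablab) (L : SasakianLiftData Cb Cm J gb)
    (hLC : IsLeviCivita Cm L.gL nablaM) {m : ℕ} (Eb : Fin m → Vb)
    (hEb : ∀ X : Vb, X = ∑ i, gb X (Eb i) • Eb i) (X Y : Vb) :
    nablaM (L.liftV X) (L.liftV Y)
      = L.liftV (nablab X Y) - L.liftF (gb X (J Y)) • L.xi := by
  have hg := L.gL_metric
  apply lift_ext L Eb hEb
  · apply half_cancel
    rw [koszul hg hLC]
    simp only [gL_lift_xi, L.gL_lift, L.deriv_xi, deriv_zero', bracket_lift_xi, L.bracket_lift,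
      met_sub_left hg, hg.smul_left, gL_xi_xi, met_zero_left hg]
    ring
  · intro Z
    apply half_cancel
    rw [koszul hg hLC]
    have := congrArg L.liftF (koszul hK.metric hK.lc X Y Z)
    simp only [map_add, map_sub, map_mul, map_ofNat] at this
    simp only [L.gL_lift, L.deriv_lift, L.bracket_lift, met_sub_left hg, hg.smul_left,
      gL_xi_lift]
    linear_combination -this

theorem nabla_xi_lift (hK : IsKaehler Cb J gb nablab) (L : SasakianLiftData Cb Cm J gb)
    (hLC : IsLeviCivita Cm L.gL nablaM) {m : ℕ} (Eb : Fin m → Vb)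
    (hEb : ∀ X : Vb, X = ∑ i, gb X (Eb i) • Eb i) (X : Vb) :
    nablaM L.xi (L.liftV X) = - L.liftV (J X) := by
  have hg := L.gL_metric
  apply lift_ext L Eb hEb
  · apply half_cancel
    rw [koszul hg hLC]
    have hb : Cm.bracket L.xi L.xi = nablaM L.xi L.xi - nablaM L.xi L.xi :=
      (hLC.torsion_free _ _).symm
    rw [sub_self] at hb
    simp only [gL_lift_xi, gL_xi_lift, gL_xi_xi, deriv_zero', deriv_one', bracket_lift_xi,
      L.bracket_xi_lift, hb, met_zero_left hg, met_neg_left hg]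
    ring
  · intro Z
    apply half_cancel
    rw [koszul hg hLC]
    simp only [gL_xi_lift, L.gL_lift, L.deriv_xi, deriv_zero',
      L.bracket_xi_lift, L.bracket_lift, met_zero_left hg, met_neg_left hg, met_sub_left hg,
      hg.smul_left, gL_xi_xi, gL_lift_xi]
    rw [J_skew hK, map_neg]
    ring

theorem nabla_lift_xi (hK : IsKaehler Cb J gb nablab) (L : SasakianLiftData Cb Cm J gb)
    (hLC : IsLeviCivita Cm L.gL nablaM) {m : ℕ} (Eb : Fin m → Vb)
    (hEb : ∀ X : Vb, X = ∑ i, gb X (Eb i) • Eb i) (X : Vb) :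
    nablaM (L.liftV X) L.xi = - L.liftV (J X) := by
  have h := hLC.torsion_free L.xi (L.liftV X)
  rw [L.bracket_xi_lift, nabla_xi_lift hK L hLC Eb hEb] at h
  exact (sub_eq_zero.mp h).symm

theorem nabla_xi_xi (L : SasakianLiftData Cb Cm J gb)
    (hLC : IsLeviCivita Cm L.gL nablaM) {m : ℕ} (Eb : Fin m → Vb)
    (hEb : ∀ X : Vb, X = ∑ i, gb X (Eb i) • Eb i) :
    nablaM L.xi L.xi = 0 := by
  have hg := L.gL_metric
  have hb : Cm.bracket L.xi L.xi = nablaM L.xi L.xi - nablaM L.xi L.xi :=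
    (hLC.torsion_free _ _).symm
  rw [sub_self] at hb
  apply lift_ext L Eb hEb
  · apply half_cancel
    rw [koszul hg hLC]
    simp only [gL_xi_xi, deriv_one', hb, met_zero_left hg]
    ring
  · intro Z
    apply half_cancel
    rw [koszul hg hLC]
    simp only [gL_xi_xi, gL_xi_lift, L.bracket_xi_lift, deriv_zero', deriv_one', hb,
      met_zero_left hg]
    ring

theorem curv_xi_lift (hK : IsKaehler Cb J gb nablab) (L : SasakianLiftData Cb Cm J gb)
    (hLC : IsLeviCivita Cm L.gL nablaM) {m : ℕ} (Eb : Fin m → Vb)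
    (hEb : ∀ X : Vb, X = ∑ i, gb X (Eb i) • Eb i) (Y Z : Vb) :
    curv Cm nablaM L.xi (L.liftV Y) (L.liftV Z) = L.liftF (gb Y Z) • L.xi := by
  unfold curv
  simp only [nabla_lift_lift hK L hLC Eb hEb, nabla_xi_lift hK L hLC Eb hEb,
    nabla_xi_xi L hLC Eb hEb, L.bracket_xi_lift, lc_zero_left hLC, lc_sub_right hLC,
    lc_neg_right hLC, hLC.leibniz, L.deriv_xi, hK.parallel, hK.J_sq, met_neg_right hK.metric,
    map_neg]
  module

theorem curv_lift_xi_xi (hK : IsKaehler Cb J gb nablab) (L : SasakianLiftData Cb Cm J gb)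
    (hLC : IsLeviCivita Cm L.gL nablaM) {m : ℕ} (Eb : Fin m → Vb)
    (hEb : ∀ X : Vb, X = ∑ i, gb X (Eb i) • Eb i) (X : Vb) :
    curv Cm nablaM (L.liftV X) L.xi L.xi = L.liftV X := by
  unfold curv
  simp only [nabla_lift_xi hK L hLC Eb hEb, nabla_xi_lift hK L hLC Eb hEb,
    nabla_xi_xi L hLC Eb hEb, bracket_lift_xi, lc_zero_left hLC, lc_zero_right hLC,
    lc_neg_right hLC, hK.J_sq, lift_neg]
  module

theorem curv_lift (hK : IsKaehler Cb J gb nablab) (L : SasakianLiftData Cb Cm J gb)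
    (hLC : IsLeviCivita Cm L.gL nablaM) {m : ℕ} (Eb : Fin m → Vb)
    (hEb : ∀ X : Vb, X = ∑ i, gb X (Eb i) • Eb i) (X Y Z T : Vb) :
    L.gL (curv Cm nablaM (L.liftV X) (L.liftV Y) (L.liftV Z)) (L.liftV T) =
      L.liftF (gb (curv Cb nablab X Y Z) T + gb Y (J Z) * gb (J X) T
        - gb X (J Z) * gb (J Y) T - 2 * (gb X (J Y) * gb (J Z) T)) := by
  have hg := L.gL_metric
  unfold curv
  simp only [nabla_lift_lift hK L hLC Eb hEb, nabla_xi_lift hK L hLC Eb hEb,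
    nabla_lift_xi hK L hLC Eb hEb,
    L.bracket_lift, lc_sub_right hLC, lc_sub_left hLC, hLC.smul_left,
    lc_neg_right hLC, hLC.leibniz, met_sub_left hg, met_neg_left hg, hg.add_left, hg.smul_left,
    L.gL_lift, gL_xi_lift, met_sub_left hK.metric, map_sub, map_add, map_mul, map_ofNat]
  ring

theorem trace_metric (hg : IsMetric gb) {m : ℕ} (Eb : Fin m → Vb)
    (hEb : ∀ X : Vb, X = ∑ i, gb X (Eb i) • Eb i) (X Y : Vb) :
    ∑ i, gb (Eb i) X * gb Y (Eb i) = gb Y X := by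
  conv_rhs => rw [hEb Y]
  rw [sum_of_add (fun W => gb W X) (fun A B => hg.add_left A B X)]
  exact Finset.sum_congr rfl fun i _ => by rw [hg.smul_left, mul_comm]

theorem trace_lift (L : SasakianLiftData Cb Cm J gb) {m k : ℕ} (Eb : Fin m → Vb)
    (hEb : ∀ X : Vb, X = ∑ i, gb X (Eb i) • Eb i) (Em : Fin k → Vm)
    (hEm : ∀ X : Vm, X = ∑ i, L.gL X (Em i) • Em i)
    (B : Vm → Vm → Fm)
    (h1 : ∀ X Y Z, B (X + Y) Z = B X Z + B Y Z) (h2 : ∀ (f : Fm) X Y, B (f • X) Y = f * B X Y)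
    (h3 : ∀ X Y Z, B X (Y + Z) = B X Y + B X Z) (h4 : ∀ (f : Fm) X Y, B X (f • Y) = f * B X Y) :
    ∑ i, B (Em i) (Em i) = B L.xi L.xi + ∑ a, B (L.liftV (Eb a)) (L.liftV (Eb a)) := by
  rw [trace_indep L.gL_metric Em (fun o : Option (Fin m) => o.elim L.xi fun a => L.liftV (Eb a))
    hEm _ B h1 h2 h3 h4]
  · simp [Fintype.sum_option]
  · intro W
    simpa [Fintype.sum_option] using lift_frame L Eb hEb W

theorem ricci_eq (L : SasakianLiftData Cb Cm J gb) (hLC : IsLeviCivita Cm L.gL nablaM)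
    {m k : ℕ} (Eb : Fin m → Vb)
    (hEb : ∀ X : Vb, X = ∑ i, gb X (Eb i) • Eb i) (Em : Fin k → Vm)
    (hEm : ∀ X : Vm, X = ∑ i, L.gL X (Em i) • Em i) (Y Z : Vm) :
    ricci Cm nablaM Em L.gL Y Z = L.gL (curv Cm nablaM L.xi Y Z) L.xi
      + ∑ a, L.gL (curv Cm nablaM (L.liftV (Eb a)) Y Z) (L.liftV (Eb a)) := by
  have hg := L.gL_metric
  unfold ricci
  exact trace_lift L Eb hEb Em hEm (fun W W' => L.gL (curv Cm nablaM W Y Z) W')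
    (fun A B T => by simp only [curv_add1 hLC, hg.add_left])
    (fun f A B => by simp only [curv_smul1 hLC, hg.smul_left])
    (fun A B T => met_add_right hg _ _ _) (fun f A B => met_smul_right hg _ _ _)

theorem ricci_lift_lift (hK : IsKaehler Cb J gb nablab) (L : SasakianLiftData Cb Cm J gb)
    (hLC : IsLeviCivita Cm L.gL nablaM)
    {m k : ℕ} (Eb : Fin m → Vb)
    (hEb : ∀ X : Vb, X = ∑ i, gb X (Eb i) • Eb i) (Em : Fin k → Vm)
    (hEm : ∀ X : Vm, X = ∑ i, L.gL X (Em i) • Em i) (X Y : Vb) :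
    ricci Cm nablaM Em L.gL (L.liftV X) (L.liftV Y)
        = L.liftF (ricci Cb nablab Eb gb X Y) - (2 : Fm) * L.liftF (gb X Y) := by
  rw [ricci_eq L hLC Eb hEb Em hEm, curv_xi_lift hK L hLC Eb hEb, L.gL_metric.smul_left, gL_xi_xi]
  simp only [curv_lift hK L hLC Eb hEb]
  rw [← map_sum]
  simp only [Finset.sum_add_distrib, Finset.sum_sub_distrib, ← Finset.mul_sum, Finset.sum_const_zero,
    trace_metric hK.metric Eb hEb, J_self hK, hK.hermitian, hK.metric.symm Y X]
  unfold ricci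
  simp only [map_add, map_sub, map_mul, map_ofNat, map_zero]
  ring

theorem ricci_xi_xi (hK : IsKaehler Cb J gb nablab) (L : SasakianLiftData Cb Cm J gb)
    (hLC : IsLeviCivita Cm L.gL nablaM)
    {m k : ℕ} (Eb : Fin m → Vb) (hE : IsOrthFrame gb Eb) (Em : Fin k → Vm)
    (hEm : ∀ X : Vm, X = ∑ i, L.gL X (Em i) • Em i) :
    ricci Cm nablaM Em L.gL L.xi L.xi = (m : Fm) := by
  have h0 : curv Cm nablaM L.xi L.xi L.xi = 0 := by
    have hb : Cm.bracket L.xi L.xi = nablaM L.xi L.xi - nablaM L.xi L.xi :=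
      (hLC.torsion_free _ _).symm
    rw [sub_self] at hb
    unfold curv
    rw [hb, lc_zero_left hLC, sub_self, sub_zero]
  rw [ricci_eq L hLC Eb hE.2 Em hEm, h0, met_zero_left L.gL_metric]
  simp [curv_lift_xi_xi hK L hLC Eb hE.2, L.gL_lift, hE.1]

end LiftHelpers

/-- Ricci tensors of a `2n`-dimensional Kähler base and of its
Sasakian lift satisfy `R̄ic(X^L, Y^L) = Ric(X,Y) - 2 g(X,Y)`, and the scalar
curvatures satisfy `s̄ = s - 2n`. -/
theorem sasakian_lift_ricci
    {Fb Vb Fm Vm : Type*} [CommRing Fb] [Algebra ℝ Fb]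
    [AddCommGroup Vb] [Module Fb Vb]
    [CommRing Fm] [Algebra ℝ Fm] [AddCommGroup Vm] [Module Fm Vm]
    (Cb : VectorCalculus Fb Vb) (Cm : VectorCalculus Fm Vm)
    (J : Vb → Vb) (gb : Vb → Vb → Fb) (nablab : Vb → Vb → Vb)
    (hK : IsKaehler Cb J gb nablab)
    (L : SasakianLiftData Cb Cm J gb)
    (nablaM : Vm → Vm → Vm) (hLC : IsLeviCivita Cm L.gL nablaM)
    (n : ℕ) (hn : 1 ≤ n)
    (Eb : Fin (2*n) → Vb) (hEb : IsOrthFrame gb Eb)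
    (Em : Fin (2*n+1) → Vm) (hEm : IsOrthFrame L.gL Em) :
    (∀ X Y : Vb,
      ricci Cm nablaM Em L.gL (L.liftV X) (L.liftV Y)
        = L.liftF (ricci Cb nablab Eb gb X Y) - (2 : Fm) * L.liftF (gb X Y)) ∧
    scalarCurv Cm nablaM Em L.gL
      = L.liftF (scalarCurv Cb nablab Eb gb) - algebraMap ℝ Fm (2 * (n : ℝ)) := by
  have hg := L.gL_metric
  have hric := ricci_lift_lift hK L hLC Eb hEb.2 Em hEm.2
  refine ⟨hric, ?_⟩
  unfold scalarCurv
  rw [trace_lift L Eb hEb.2 Em hEm.2 (ricci Cm nablaM Em L.gL)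
    (fun A B T => by
      simp only [ricci, curv_add2 hLC, hg.add_left, Finset.sum_add_distrib])
    (fun f A B => by
      simp only [ricci, curv_smul2 hLC, hg.smul_left, Finset.mul_sum])
    (fun A B T => by
      simp only [ricci, curv_add3 hLC, hg.add_left, Finset.sum_add_distrib])
    (fun f A B => by
      simp only [ricci, curv_smul3 hLC, hg.smul_left, Finset.mul_sum])]
  rw [ricci_xi_xi hK L hLC Eb hEb Em hEm.2]
  simp only [hric, hEb.1, if_true, map_one, mul_one, Finset.sum_sub_distrib, Finset.sum_const,
    Finset.card_univ, Fintype.card_fin, nsmul_eq_mul, map_sum, map_mul, map_ofNat, map_natCast,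
    Nat.cast_mul, Nat.cast_ofNat]
  ring
end

section
/- On the Sasakian lift of a Kähler base, the tensor field ρ̄(·,·) = R̄ic(·, φ·) (where R̄ic is the Ricci tensor of the lift metric g^L) is a closed 2-form, and it equals ρ̄ = π₂*ρ − 2π₂*ω, the pullback of the Ricci form ρ of the Kähler base minus twice the pullback of the Kähler form ω. -/
section Aux

variable {F : Type*} {V : Type*} [CommRing F] [Algebra ℝ F]
  [AddCommGroup V] [Module F V]

theorem two_cancel_aux {x y : F} (h : 2 * x = 2 * y) : x = y := by
  have h1 : algebraMap ℝ F (1/2) * 2 = 1 := by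
    have : (2 : F) = algebraMap ℝ F 2 := (map_ofNat (algebraMap ℝ F) 2).symm
    rw [this, ← map_mul]; norm_num
  calc x = algebraMap ℝ F (1/2) * (2 * x) := by rw [← mul_assoc, h1, one_mul]
    _ = algebraMap ℝ F (1/2) * (2 * y) := by rw [h]
    _ = y := by rw [← mul_assoc, h1, one_mul]

namespace IsMetric
variable {g : V → V → F}
theorem add_right' (hg : IsMetric g) (X Y Z : V) : g X (Y + Z) = g X Y + g X Z := by
  rw [hg.symm, hg.add_left, hg.symm Y, hg.symm Z]
theorem smul_right' (hg : IsMetric g) (f : F) (X Y : V) : g X (f • Y) = f * g X Y := by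
  rw [hg.symm, hg.smul_left, hg.symm Y]
theorem zero_left' (hg : IsMetric g) (X : V) : g 0 X = 0 := by
  have := hg.smul_left 0 0 X
  simpa using this
theorem zero_right' (hg : IsMetric g) (X : V) : g X 0 = 0 := by
  rw [hg.symm, hg.zero_left']
theorem neg_left' (hg : IsMetric g) (X Y : V) : g (-X) Y = - g X Y := by
  have := hg.smul_left (-1) X Y
  simpa using this
theorem neg_right' (hg : IsMetric g) (X Y : V) : g X (-Y) = - g X Y := by
  rw [hg.symm, hg.neg_left', hg.symm]
theorem sub_left' (hg : IsMetric g) (X Y Z : V) : g (X - Y) Z = g X Z - g Y Z := by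
  rw [sub_eq_add_neg, hg.add_left, hg.neg_left', sub_eq_add_neg]
theorem sub_right' (hg : IsMetric g) (X Y Z : V) : g X (Y - Z) = g X Y - g X Z := by
  rw [sub_eq_add_neg, hg.add_right', hg.neg_right', sub_eq_add_neg]
theorem sum_left' (hg : IsMetric g) {ι : Type*} (s : Finset ι) (f : ι → V) (Z : V) :
    g (∑ i ∈ s, f i) Z = ∑ i ∈ s, g (f i) Z := by
  classical
  induction s using Finset.induction_on with
  | empty => simp [hg.zero_left']
  | insert a s ha ih => rw [Finset.sum_insert ha, Finset.sum_insert ha, hg.add_left, ih]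
theorem sum_right' (hg : IsMetric g) {ι : Type*} (s : Finset ι) (f : ι → V) (Z : V) :
    g Z (∑ i ∈ s, f i) = ∑ i ∈ s, g Z (f i) := by
  rw [hg.symm, hg.sum_left']
  exact Finset.sum_congr rfl fun i _ => hg.symm _ _
end IsMetric

namespace VectorCalculus
variable (C : VectorCalculus F V)
theorem bracket_add_right' (X Y Z : V) :
    C.bracket X (Y + Z) = C.bracket X Y + C.bracket X Z := by
  rw [C.bracket_antisymm, C.bracket_add_left, C.bracket_antisymm Y, C.bracket_antisymm Z]; abel
theorem bracket_smul_right' (f : F) (X Y : V) :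
    C.bracket X (f • Y) = f • C.bracket X Y + C.deriv X f • Y := by
  rw [C.bracket_antisymm, C.bracket_smul_left, C.bracket_antisymm Y]; module
theorem deriv_zero' (X : V) : C.deriv X 0 = 0 := by
  have := C.deriv_const X 0
  simpa using this
theorem deriv_one' (X : V) : C.deriv X 1 = 0 := by
  have := C.deriv_const X 1
  simpa using this
theorem deriv_neg' (X : V) (f : F) : C.deriv X (-f) = - C.deriv X f := by
  have := C.deriv_add X f (-f)
  rw [add_neg_cancel, C.deriv_zero'] at this
  linear_combination -this
theorem deriv_sub' (X : V) (f h : F) : C.deriv X (f - h) = C.deriv X f - C.deriv X h := by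
  rw [sub_eq_add_neg, C.deriv_add, C.deriv_neg', sub_eq_add_neg]
theorem deriv_two' (X : V) : C.deriv X 2 = 0 := by
  have := C.deriv_const X 2
  rwa [map_ofNat (algebraMap ℝ F) 2] at this
theorem deriv_two_mul' (X : V) (f : F) : C.deriv X (2 * f) = 2 * C.deriv X f := by
  rw [C.deriv_mul, C.deriv_two']; ring
theorem deriv_neg_left' (X : V) (f : F) : C.deriv (-X) f = - C.deriv X f := by
  have := C.deriv_smul_left (-1) X f
  simpa using this
theorem deriv_sum' (X : V) {ι : Type*} (s : Finset ι) (f : ι → F) :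
    C.deriv X (∑ i ∈ s, f i) = ∑ i ∈ s, C.deriv X (f i) := by
  classical
  induction s using Finset.induction_on with
  | empty => simp [C.deriv_zero']
  | insert a s ha ih => rw [Finset.sum_insert ha, Finset.sum_insert ha, C.deriv_add, ih]
end VectorCalculus

namespace IsLeviCivita
variable {C : VectorCalculus F V} {g : V → V → F} {nabla : V → V → V}

theorem neg_left' (h : IsLeviCivita C g nabla) (X Y : V) : nabla (-X) Y = - nabla X Y := by
  have := h.smul_left (-1) X Y
  simpa using this
theorem zero_left' (h : IsLeviCivita C g nabla) (Y : V) : nabla 0 Y = 0 := by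
  have := h.smul_left 0 0 Y
  simpa using this
theorem sub_left' (h : IsLeviCivita C g nabla) (X Y Z : V) :
    nabla (X - Y) Z = nabla X Z - nabla Y Z := by
  rw [sub_eq_add_neg, h.add_left, h.neg_left', sub_eq_add_neg]
theorem zero_right' (h : IsLeviCivita C g nabla) (X : V) : nabla X 0 = 0 := by
  have := h.add_right X 0 0
  simpa using this
theorem neg_right' (h : IsLeviCivita C g nabla) (X Y : V) : nabla X (-Y) = - nabla X Y := by
  have := h.add_right X Y (-Y)
  rw [add_neg_cancel, h.zero_right'] at this
  rw [eq_neg_iff_add_eq_zero, add_comm, ← this]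
theorem sub_right' (h : IsLeviCivita C g nabla) (X Y Z : V) :
    nabla X (Y - Z) = nabla X Y - nabla X Z := by
  rw [sub_eq_add_neg, h.add_right, h.neg_right', sub_eq_add_neg]

theorem koszul' (h : IsLeviCivita C g nabla) (hg : IsMetric g) (X Y Z : V) :
    2 * g (nabla X Y) Z = C.deriv X (g Y Z) + C.deriv Y (g X Z) - C.deriv Z (g X Y)
      + g (C.bracket X Y) Z - g (C.bracket X Z) Y - g (C.bracket Y Z) X := by
  rw [h.compat, h.compat, h.compat, ← h.torsion_free, ← h.torsion_free, ← h.torsion_free,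
    hg.sub_left', hg.sub_left', hg.sub_left', hg.symm Y (nabla X Z), hg.symm X (nabla Y Z),
    hg.symm X (nabla Z Y)]
  ring

theorem curv_anti (h : IsLeviCivita C g nabla) (X Y Z : V) :
    curv C nabla X Y Z = - curv C nabla Y X Z := by
  unfold curv
  rw [C.bracket_antisymm X Y, h.neg_left']; abel
theorem curv_add1 (h : IsLeviCivita C g nabla) (X X' Y Z : V) :
    curv C nabla (X + X') Y Z = curv C nabla X Y Z + curv C nabla X' Y Z := by
  unfold curv
  simp only [C.bracket_add_left, h.add_left, h.add_right]; abel
theorem curv_smul1 (h : IsLeviCivita C g nabla) (f : F) (X Y Z : V) :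
    curv C nabla (f • X) Y Z = f • curv C nabla X Y Z := by
  unfold curv
  simp only [C.bracket_smul_left, h.smul_left, h.sub_left', h.leibniz]; module
theorem curv_add2 (h : IsLeviCivita C g nabla) (X Y Y' Z : V) :
    curv C nabla X (Y + Y') Z = curv C nabla X Y Z + curv C nabla X Y' Z := by
  rw [h.curv_anti, h.curv_add1, h.curv_anti Y, h.curv_anti Y']; abel
theorem curv_smul2 (h : IsLeviCivita C g nabla) (f : F) (X Y Z : V) :
    curv C nabla X (f • Y) Z = f • curv C nabla X Y Z := by
  rw [h.curv_anti, h.curv_smul1, h.curv_anti Y]; module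
theorem curv_add3 (h : IsLeviCivita C g nabla) (X Y Z Z' : V) :
    curv C nabla X Y (Z + Z') = curv C nabla X Y Z + curv C nabla X Y Z' := by
  unfold curv
  simp only [h.add_right]; abel
theorem curv_smul3 (h : IsLeviCivita C g nabla) (f : F) (X Y Z : V) :
    curv C nabla X Y (f • Z) = f • curv C nabla X Y Z := by
  unfold curv
  simp only [h.leibniz, h.add_right, C.deriv_bracket]; module
theorem curv_neg3 (h : IsLeviCivita C g nabla) (X Y Z : V) :
    curv C nabla X Y (-Z) = - curv C nabla X Y Z := by
  have := h.curv_smul3 (-1) X Y Z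
  simpa using this
theorem curv_neg1 (h : IsLeviCivita C g nabla) (X Y Z : V) :
    curv C nabla (-X) Y Z = - curv C nabla X Y Z := by
  have := h.curv_smul1 (-1) X Y Z
  simpa using this

theorem bianchi1 (h : IsLeviCivita C g nabla) (X Y Z : V) :
    curv C nabla X Y Z + curv C nabla Y Z X + curv C nabla Z X Y = 0 := by
  have j := C.jacobi X Y Z
  simp only [← h.torsion_free, h.sub_right'] at j
  unfold curv
  simp only [← h.torsion_free]
  rw [← j]
  simp only [h.sub_left']
  abel

theorem curv_skew34 (h : IsLeviCivita C g nabla) (hg : IsMetric g) (X Y Z W : V) :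
    g (curv C nabla X Y Z) W = - g (curv C nabla X Y W) Z := by
  have e := C.deriv_bracket X Y (g Z W)
  simp only [h.compat, C.deriv_add] at e
  unfold curv
  simp only [hg.sub_left']
  simp only [hg.symm Z, hg.symm (nabla X Z) (nabla Y W), hg.symm (nabla Y Z) (nabla X W)] at e
  linear_combination -e

theorem curv_pair (h : IsLeviCivita C g nabla) (hg : IsMetric g) (X Y Z W : V) :
    g (curv C nabla X Y Z) W = g (curv C nabla Z W X) Y := by
  have b : ∀ X Y Z W, g (curv C nabla X Y Z) W + g (curv C nabla Y Z X) W
      + g (curv C nabla Z X Y) W = 0 := by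
    intro X Y Z W
    rw [← hg.add_left, ← hg.add_left, h.bianchi1, hg.zero_left']
  have s1 : ∀ X Y Z W, g (curv C nabla X Y Z) W = - g (curv C nabla Y X Z) W := by
    intro X Y Z W
    rw [h.curv_anti, hg.neg_left']
  have s2 := h.curv_skew34 hg
  apply two_cancel_aux
  have b1 := b X Y Z W
  have b2 := b Y Z W X
  have b3 := b Z W X Y
  have b4 := b W X Y Z
  rw [s2 Y Z W X, s2 Z W Y X, s1 W Y Z X, s2 Y W Z X] at b2
  rw [s1 X Z W Y, s2 Z X W Y, s2 W X Z Y] at b3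
  rw [s2 X Y W Z, s2 W X Y Z, s1 Y W X Z] at b4
  grind

/-- second Bianchi identity in operator form -/
theorem bianchi2 (h : IsLeviCivita C g nabla) (X Y Z U : V) :
    (nabla X (curv C nabla Y Z U) - curv C nabla Y Z (nabla X U)
      - curv C nabla (C.bracket X Y) Z U)
    + (nabla Y (curv C nabla Z X U) - curv C nabla Z X (nabla Y U)
      - curv C nabla (C.bracket Y Z) X U)
    + (nabla Z (curv C nabla X Y U) - curv C nabla X Y (nabla Z U)
      - curv C nabla (C.bracket Z X) Y U) = 0 := by
  have j : nabla (C.bracket X (C.bracket Y Z) + C.bracket Y (C.bracket Z X)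
    + C.bracket Z (C.bracket X Y)) U = 0 := by rw [C.jacobi, h.zero_left']
  unfold curv
  rw [C.bracket_antisymm (C.bracket X Y) Z, C.bracket_antisymm (C.bracket Y Z) X,
    C.bracket_antisymm (C.bracket Z X) Y]
  simp only [h.neg_left', h.sub_right']
  simp only [h.add_left] at j
  rw [← neg_zero, ← j]
  abel
end IsLeviCivita

/-- Trace of an `F`-linear operator is frame independent. -/
theorem frame_trace {g : V → V → F} (hg : IsMetric g) {m k : ℕ} {E : Fin m → V} {B : Fin k → V}
    (hE : ∀ X : V, X = ∑ i, g X (E i) • E i) (hB : ∀ X : V, X = ∑ i, g X (B i) • B i)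
    (T : V → V) (hadd : ∀ X Y, T (X + Y) = T X + T Y) (hsmul : ∀ (f : F) X, T (f • X) = f • T X) :
    ∑ i, g (T (E i)) (E i) = ∑ i, g (T (B i)) (B i) := by
  let T' : V →ₗ[F] V := { toFun := T, map_add' := hadd, map_smul' := hsmul }
  have h1 : ∀ i, g (T (E i)) (E i) = ∑ k, g (E i) (B k) * g (T (B k)) (E i) := by
    intro i
    have : T (E i) = ∑ k, g (E i) (B k) • T (B k) := by
      change T' (E i) = ∑ k, g (E i) (B k) • T' (B k)
      conv_lhs => rw [hB (E i)]
      simp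
    rw [this, hg.sum_left']
    simp only [hg.smul_left]
  have h2 : ∀ k, g (T (B k)) (B k) = ∑ i, g (E i) (B k) * g (T (B k)) (E i) := by
    intro k
    conv_lhs => rw [hE (B k)]
    rw [hg.sum_right']
    have : (∑ i, g (T (∑ i, g (B k) (E i) • E i)) (g (B k) (E i) • E i)) =
      ∑ i, g (T (B k)) (g (B k) (E i) • E i) := by rw [← hE (B k)]
    rw [this]
    simp only [hg.smul_right', hg.symm (B k)]
  simp only [h1, h2]
  exact Finset.sum_comm

theorem frame_deriv_trace {C : VectorCalculus F V} {g : V → V → F} {nabla : V → V → V}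
    (hg : IsMetric g) (h : IsLeviCivita C g nabla) {m : ℕ} {E : Fin m → V}
    (hE : IsOrthFrame g E)
    (T : V → V) (hadd : ∀ X Y, T (X + Y) = T X + T Y) (hsmul : ∀ (f : F) X, T (f • X) = f • T X)
    (X : V) :
    C.deriv X (∑ i, g (T (E i)) (E i))
      = ∑ i, g (nabla X (T (E i)) - T (nabla X (E i))) (E i) := by
  let T' : V →ₗ[F] V := { toFun := T, map_add' := hadd, map_smul' := hsmul }
  have anti : ∀ i j, g (nabla X (E i)) (E j) = - g (nabla X (E j)) (E i) := by
    intro i j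
    have e := h.compat X (E i) (E j)
    have z : C.deriv X (g (E i) (E j)) = 0 := by
      rw [hE.1]; split_ifs
      · exact C.deriv_one' X
      · exact C.deriv_zero' X
    rw [z, hg.symm (E i)] at e
    linear_combination -e
  have h1 : ∀ i, g (T (E i)) (nabla X (E i))
      = ∑ j, g (nabla X (E i)) (E j) * g (T (E i)) (E j) := by
    intro i
    conv_lhs => rw [hE.2 (nabla X (E i))]
    rw [hg.sum_right']
    simp only [hg.smul_right']
  have h2 : ∀ j, g (T (nabla X (E j))) (E j)
      = ∑ i, g (nabla X (E j)) (E i) * g (T (E i)) (E j) := by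
    intro j
    have : T (nabla X (E j)) = ∑ k, g (nabla X (E j)) (E k) • T (E k) := by
      change T' _ = ∑ k, g (nabla X (E j)) (E k) • T' (E k)
      conv_lhs => rw [hE.2 (nabla X (E j))]
      simp
    rw [this, hg.sum_left']
    simp only [hg.smul_left]
  rw [C.deriv_sum']
  simp only [h.compat, hg.sub_left', Finset.sum_add_distrib, Finset.sum_sub_distrib]
  rw [sub_eq_add_neg]
  congr 1
  simp only [h1, h2]
  rw [Finset.sum_comm, ← Finset.sum_neg_distrib]
  refine Finset.sum_congr rfl fun j _ => ?_
  rw [← Finset.sum_neg_distrib]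
  refine Finset.sum_congr rfl fun i _ => ?_
  rw [anti i j]; ring

section Kaehler
variable {C : VectorCalculus F V} {J : V → V} {g : V → V → F} {nabla : V → V → V}

theorem kJskew (hK : IsKaehler C J g nabla) (X Y : V) : g X (J Y) = - g (J X) Y := by
  rw [← hK.hermitian X (J Y), hK.J_sq, hK.metric.neg_right']

theorem kJneg (hK : IsKaehler C J g nabla) (X : V) : J (-X) = - J X := by
  have := hK.J_smul (-1) X
  simpa using this
theorem kJsub (hK : IsKaehler C J g nabla) (X Y : V) : J (X - Y) = J X - J Y := by
  rw [sub_eq_add_neg, hK.J_add, kJneg hK, sub_eq_add_neg]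

theorem kcurvJ (hK : IsKaehler C J g nabla) (X Y Z : V) :
    curv C nabla X Y (J Z) = J (curv C nabla X Y Z) := by
  unfold curv
  simp only [hK.parallel, kJsub hK]

theorem kcurvJJ12 (hK : IsKaehler C J g nabla) (X Y Z W : V) :
    g (curv C nabla (J X) (J Y) Z) W = g (curv C nabla X Y Z) W := by
  rw [hK.lc.curv_pair hK.metric, kcurvJ hK, hK.hermitian, hK.lc.curv_pair hK.metric]

theorem kframeJ (hK : IsKaehler C J g nabla) {m : ℕ} {E : Fin m → V}
    (hE : ∀ X : V, X = ∑ i, g X (E i) • E i) (X : V) : X = ∑ i, g X (J (E i)) • J (E i) := by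
  let J' : V →ₗ[F] V := { toFun := J, map_add' := hK.J_add, map_smul' := hK.J_smul }
  have h1 : J (J X) = ∑ i, g (J X) (E i) • J (E i) := by
    change J' (J X) = ∑ i, g (J X) (E i) • J' (E i)
    conv_lhs => rw [hE (J X)]
    simp
  rw [hK.J_sq] at h1
  have := congrArg Neg.neg h1
  rw [neg_neg] at this
  simp only [kJskew hK, neg_smul, Finset.sum_neg_distrib]
  exact this

theorem kric_symm (hK : IsKaehler C J g nabla) {m : ℕ} (E : Fin m → V) (X Y : V) :
    ricci C nabla E g X Y = ricci C nabla E g Y X := by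
  unfold ricci
  refine Finset.sum_congr rfl fun i _ => ?_
  rw [hK.lc.curv_pair hK.metric, hK.lc.curv_anti, hK.metric.neg_left',
    hK.lc.curv_skew34 hK.metric, neg_neg]

theorem kric_JJ (hK : IsKaehler C J g nabla) {m : ℕ} {E : Fin m → V}
    (hE : ∀ X : V, X = ∑ i, g X (E i) • E i) (X Y : V) :
    ricci C nabla E g (J X) (J Y) = ricci C nabla E g X Y := by
  unfold ricci
  rw [frame_trace hK.metric hE (kframeJ hK hE) (fun U => curv C nabla U (J X) (J Y))
    (fun _ _ => hK.lc.curv_add1 _ _ _ _) (fun _ _ => hK.lc.curv_smul1 _ _ _ _)]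
  refine Finset.sum_congr rfl fun i _ => ?_
  rw [kcurvJJ12 hK, kcurvJ hK, hK.hermitian]

theorem kric_neg1 (hK : IsKaehler C J g nabla) {m : ℕ} (E : Fin m → V) (X Y : V) :
    ricci C nabla E g X (-Y) = - ricci C nabla E g X Y := by
  unfold ricci
  simp only [hK.lc.curv_neg3, hK.metric.neg_left', Finset.sum_neg_distrib]

theorem krho_skew (hK : IsKaehler C J g nabla) {m : ℕ} {E : Fin m → V}
    (hE : ∀ X : V, X = ∑ i, g X (E i) • E i) (X Y : V) :
    ricci C nabla E g X (J Y) = - ricci C nabla E g Y (J X) := by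
  rw [← kric_JJ hK hE X (J Y), hK.J_sq, kric_neg1 hK, kric_symm hK]

theorem krho_trace (hK : IsKaehler C J g nabla) {m : ℕ} {E : Fin m → V}
    (hE : ∀ X : V, X = ∑ i, g X (E i) • E i) (X Y : V) :
    ∑ i, g (curv C nabla X Y (J (E i))) (E i) = - (2 * ricci C nabla E g X (J Y)) := by
  have S : ∀ X Y, ∑ i, g (curv C nabla (J (E i)) X Y) (E i) = ricci C nabla E g X (J Y) := by
    intro X Y
    rw [frame_trace hK.metric hE (kframeJ hK hE) (fun U => curv C nabla (J U) X Y)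
      (fun _ _ => by rw [hK.J_add, hK.lc.curv_add1])
      (fun _ _ => by rw [hK.J_smul, hK.lc.curv_smul1])]
    unfold ricci
    refine Finset.sum_congr rfl fun i _ => ?_
    rw [hK.J_sq, kJskew hK, ← kcurvJ hK, hK.lc.curv_neg1, hK.metric.neg_left', neg_neg]
  have b : ∀ i, g (curv C nabla X Y (J (E i))) (E i)
      = g (curv C nabla (J (E i)) Y X) (E i) - g (curv C nabla (J (E i)) X Y) (E i) := by
    intro i
    have e := hK.lc.bianchi1 X Y (J (E i))
    rw [hK.lc.curv_anti Y] at e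
    have : curv C nabla X Y (J (E i)) = curv C nabla (J (E i)) Y X - curv C nabla (J (E i)) X Y := by
      rw [← sub_eq_zero, ← e]; abel
    rw [this, hK.metric.sub_left']
  simp only [b, Finset.sum_sub_distrib, S]
  rw [krho_skew hK hE Y X]; ring

theorem krho_closed (hK : IsKaehler C J g nabla) {m : ℕ} {E : Fin m → V}
    (hE : IsOrthFrame g E) :
    IsClosedTwoForm C (fun X Y => ricci C nabla E g X (J Y)) := by
  have D : ∀ X Y Z, - (2 * C.deriv X (ricci C nabla E g Y (J Z)))
      = ∑ i, g (nabla X (curv C nabla Y Z (J (E i))) - curv C nabla Y Z (nabla X (J (E i)))) (E i) := by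
    intro X Y Z
    rw [← C.deriv_two_mul', ← C.deriv_neg', ← krho_trace hK hE.2,
      frame_deriv_trace hK.metric hK.lc hE (fun U => curv C nabla Y Z (J U))
        (fun _ _ => by rw [hK.J_add, hK.lc.curv_add3])
        (fun _ _ => by rw [hK.J_smul, hK.lc.curv_smul3])]
    simp only [hK.parallel]
  have T := krho_trace hK hE.2
  intro X Y Z
  apply two_cancel_aux
  have B : ∑ i, g ((nabla X (curv C nabla Y Z (J (E i))) - curv C nabla Y Z (nabla X (J (E i)))
      - curv C nabla (C.bracket X Y) Z (J (E i)))
    + (nabla Y (curv C nabla Z X (J (E i))) - curv C nabla Z X (nabla Y (J (E i)))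
      - curv C nabla (C.bracket Y Z) X (J (E i)))
    + (nabla Z (curv C nabla X Y (J (E i))) - curv C nabla X Y (nabla Z (J (E i)))
      - curv C nabla (C.bracket Z X) Y (J (E i)))) (E i) = 0 := by
    simp only [hK.lc.bianchi2, hK.metric.zero_left', Finset.sum_const_zero]
  have D1 := D X Y Z
  have D2 := D Y Z X
  have D3 := D Z X Y
  have T1 := T (C.bracket X Y) Z
  have T2 := T (C.bracket Y Z) X
  have T3 := T (C.bracket Z X) Y
  simp only [hK.metric.add_left, hK.metric.sub_left', Finset.sum_add_distrib,
    Finset.sum_sub_distrib] at B D1 D2 D3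
  have s1 : ricci C nabla E g (C.bracket X Z) (J Y) = - ricci C nabla E g (C.bracket Z X) (J Y) := by
    rw [krho_skew hK hE.2, krho_skew hK hE.2 (C.bracket Z X), C.bracket_antisymm X Z, kJneg hK,
      kric_neg1 hK]
  have s2 : C.deriv Y (ricci C nabla E g X (J Z)) = - C.deriv Y (ricci C nabla E g Z (J X)) := by
    rw [krho_skew hK hE.2, C.deriv_neg']
  simp only [s1, s2]
  linear_combination -B - D1 - D2 - D3 - T1 - T2 - T3

theorem komega_closed (hK : IsKaehler C J g nabla) :
    IsClosedTwoForm C (fun X Y => g X (J Y)) := by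
  intro X Y Z
  simp only [hK.lc.compat, ← hK.lc.torsion_free, hK.metric.sub_left', hK.parallel]
  have s : ∀ X Y, g X (J Y) = - g Y (J X) := by
    intro X Y; rw [kJskew hK, hK.metric.symm]
  rw [s X (nabla Y Z), s X (nabla Z Y), s Y (nabla X Z)]
  ring
end Kaehler

/-- Values of the exterior derivative. -/
theorem closed_of_generators (C : VectorCalculus F V) (Th : V → V → F)
    (hadd : ∀ X Y Z, Th (X + Y) Z = Th X Z + Th Y Z)
    (hsmul : ∀ (f : F) X Z, Th (f • X) Z = f * Th X Z)
    (hskew : ∀ X Y, Th X Y = - Th Y X)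
    (S : Set V) (hS : ∀ X, X ∈ Submodule.span F S)
    (h : ∀ X ∈ S, ∀ Y ∈ S, ∀ Z ∈ S,
      C.deriv X (Th Y Z) - C.deriv Y (Th X Z) + C.deriv Z (Th X Y)
      - Th (C.bracket X Y) Z + Th (C.bracket X Z) Y - Th (C.bracket Y Z) X = 0) :
    IsClosedTwoForm C Th := by
  let d : V → V → V → F := fun X Y Z => C.deriv X (Th Y Z) - C.deriv Y (Th X Z) + C.deriv Z (Th X Y)
      - Th (C.bracket X Y) Z + Th (C.bracket X Z) Y - Th (C.bracket Y Z) X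
  have hadd2 : ∀ X Y Z, Th Z (X + Y) = Th Z X + Th Z Y := by
    intro X Y Z; rw [hskew, hadd, hskew X, hskew Y]; ring
  have hsmul2 : ∀ (f : F) X Z, Th Z (f • X) = f * Th Z X := by
    intro f X Z; rw [hskew, hsmul, hskew X]; ring
  have hneg : ∀ X Z, Th (-X) Z = - Th X Z := by
    intro X Z
    have := hsmul (-1) X Z
    simpa using this
  have hcyc : ∀ X Y Z, d X Y Z = d Y Z X := by
    intro X Y Z
    simp only [d]
    rw [hskew X Z, hskew X Y, C.bracket_antisymm X Z, C.bracket_antisymm Y X, C.deriv_neg',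
      C.deriv_neg', hneg, hneg]
    ring
  have dadd : ∀ X X' Y Z, d (X + X') Y Z = d X Y Z + d X' Y Z := by
    intro X X' Y Z
    simp only [d, hadd, hadd2, C.deriv_add, C.deriv_add_left, C.bracket_add_left]
    ring
  have hsub : ∀ X Y Z, Th (X - Y) Z = Th X Z - Th Y Z := by
    intro X Y Z; rw [sub_eq_add_neg, hadd, hneg, sub_eq_add_neg]
  have dsmul : ∀ (f : F) X Y Z, d (f • X) Y Z = f * d X Y Z := by
    intro f X Y Z
    simp only [d, hsmul, hsmul2, hsub, C.deriv_mul, C.deriv_smul_left, C.bracket_smul_left]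
    rw [hskew X Z, hskew X Y, C.deriv_neg', C.deriv_neg']
    ring
  have ext : ∀ Y Z, (∀ X ∈ S, d X Y Z = 0) → ∀ X, d X Y Z = 0 := by
    intro Y Z hh X
    induction hS X using Submodule.span_induction with
    | mem x hx => exact hh x hx
    | zero => have := dsmul 0 0 Y Z; simpa using this
    | add x y _ _ hx hy => rw [dadd, hx, hy, add_zero]
    | smul a x _ hx => rw [dsmul, hx, mul_zero]
  have e1 : ∀ Y ∈ S, ∀ Z ∈ S, ∀ X, d X Y Z = 0 := fun Y hY Z hZ =>
    ext Y Z fun X hX => h X hX Y hY Z hZ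
  have e2 : ∀ Z ∈ S, ∀ X Y, d X Y Z = 0 := fun Z hZ X Y => by
    rw [hcyc]
    exact ext Z X (fun Y hY => by rw [← hcyc]; exact e1 Y hY Z hZ X) Y
  intro X Y Z
  change d X Y Z = 0
  rw [← hcyc]
  exact ext X Y (fun Z hZ => by rw [hcyc]; exact e2 Z hZ X Y) Z

end Aux


/-- On the Sasakian lift, `ρ̄(·,·) = R̄ic(·, φ·)` is a closed
2-form and `ρ̄ = π₂*ρ - 2 π₂*ω`: it is skew-symmetric, closed, on lifts it equals
the pullback of `ρ(X,Y) = Ric(X,JY)` minus twice the pullback of the Kähler form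
`ω(X,Y) = g(X,JY)`, and it annihilates `ξ`. -/
theorem sasakian_lift_ricci_form
    {Fb Vb Fm Vm : Type*} [CommRing Fb] [Algebra ℝ Fb]
    [AddCommGroup Vb] [Module Fb Vb]
    [CommRing Fm] [Algebra ℝ Fm] [AddCommGroup Vm] [Module Fm Vm]
    (Cb : VectorCalculus Fb Vb) (Cm : VectorCalculus Fm Vm)
    (J : Vb → Vb) (gb : Vb → Vb → Fb) (nablab : Vb → Vb → Vb)
    (hK : IsKaehler Cb J gb nablab)
    (L : SasakianLiftData Cb Cm J gb)
    (nablaM : Vm → Vm → Vm) (hLC : IsLeviCivita Cm L.gL nablaM)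
    (n : ℕ) (hn : 1 ≤ n)
    (Eb : Fin (2*n) → Vb) (hEb : IsOrthFrame gb Eb)
    (Em : Fin (2*n+1) → Vm) (hEm : IsOrthFrame L.gL Em) :
    (∀ W W' : Vm, ricci Cm nablaM Em L.gL W (L.phi W')
        = - ricci Cm nablaM Em L.gL W' (L.phi W)) ∧
    IsClosedTwoForm Cm (fun W W' => ricci Cm nablaM Em L.gL W (L.phi W')) ∧
    (∀ X Y : Vb,
      ricci Cm nablaM Em L.gL (L.liftV X) (L.phi (L.liftV Y))
        = L.liftF (ricci Cb nablab Eb gb X (J Y)) - (2 : Fm) * L.liftF (gb X (J Y))) ∧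
    (∀ W : Vm, ricci Cm nablaM Em L.gL L.xi (L.phi W) = 0) := by
  have hg := L.gL_metric
  have hgx : ∀ W, L.gL W L.xi = L.eta W := fun W => by rw [hg.symm, L.gL_xi]
  have lift_neg : ∀ X, L.liftV (-X) = - L.liftV X := fun X => by
    have := L.liftV_smul (-1) X
    simpa using this
  have lift_sub : ∀ X Y, L.liftV (X - Y) = L.liftV X - L.liftV Y := fun X Y => by
    rw [sub_eq_add_neg, L.liftV_add, lift_neg, sub_eq_add_neg]
  have two_lift : ∀ f, L.liftF (2 * f) = 2 * L.liftF f := fun f => by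
    rw [map_mul, map_ofNat]
  let S : Set Vm := insert L.xi (Set.range L.liftV)
  have hS : ∀ W, W ∈ Submodule.span Fm S := by
    intro W
    obtain ⟨k, a, X, h⟩ := L.spanning W
    rw [h]
    refine Submodule.add_mem _ (Submodule.smul_mem _ _ (Submodule.subset_span (by simp [S]))) ?_
    exact Submodule.sum_mem _ fun i _ =>
      Submodule.smul_mem _ _ (Submodule.subset_span (by simp [S]))
  -- the lifted frame
  have hfr : ∀ W, W = L.gL W L.xi • L.xi
      + ∑ j, L.gL W (L.liftV (Eb j)) • L.liftV (Eb j) := by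
    intro W
    induction hS W using Submodule.span_induction with
    | mem x hx =>
      rcases hx with rfl | ⟨X, rfl⟩
      · simp [L.gL_xi, L.eta_xi, L.eta_lift]
      · let l : Vb →+ Vm := AddMonoidHom.mk' L.liftV L.liftV_add
        rw [hgx, L.eta_lift, zero_smul, zero_add]
        have : L.liftV X = ∑ j, L.liftV (gb X (Eb j) • Eb j) := by
          change l X = ∑ j, l (gb X (Eb j) • Eb j)
          conv_lhs => rw [hEb.2 X]
          simp
        simp only [L.gL_lift]
        simpa only [L.liftV_smul] using this
    | zero => simp [hg.zero_left']
    | add x y _ _ hx hy =>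
      simp only [hg.add_left, add_smul, Finset.sum_add_distrib]
      nth_rewrite 1 [hx, hy]
      abel
    | smul a x _ hx =>
      simp only [hg.smul_left, mul_smul, ← Finset.smul_sum, ← smul_add]
      rw [← hx]
  let B : Fin (2*n+1) → Vm := Fin.cons L.xi (fun j => L.liftV (Eb j))
  have hB : ∀ W, W = ∑ i, L.gL W (B i) • B i := by
    intro W
    rw [Fin.sum_univ_succ]
    simpa [B] using hfr W
  have hnd : ∀ A A', L.eta A = L.eta A' →
      (∀ X, 2 * L.gL A (L.liftV X) = 2 * L.gL A' (L.liftV X)) → A = A' := by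
    intro A A' h1 h2
    rw [hfr A, hfr A', hgx, hgx, h1]
    congr 1
    exact Finset.sum_congr rfl fun j _ => by rw [two_cancel_aux (h2 (Eb j))]
  have eta_sub : ∀ A A', L.eta (A - A') = L.eta A - L.eta A' := fun A A' => by
    rw [← hgx, ← hgx, ← hgx, hg.sub_left']
  have eta_neg : ∀ A, L.eta (-A) = - L.eta A := fun A => by
    rw [← hgx, ← hgx, hg.neg_left']
  have br_lift_xi : ∀ X, Cm.bracket (L.liftV X) L.xi = 0 := fun X => by
    rw [Cm.bracket_antisymm, L.bracket_xi_lift, neg_zero]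
  have br_xi_xi : L.eta (Cm.bracket L.xi L.xi) = 0 := by
    have := congrArg L.eta (Cm.bracket_antisymm L.xi L.xi)
    rw [eta_neg] at this
    apply two_cancel_aux
    linear_combination this
  have gxl : ∀ X, L.gL L.xi (L.liftV X) = 0 := fun X => by rw [L.gL_xi, L.eta_lift]
  have glx : ∀ X, L.gL (L.liftV X) L.xi = 0 := fun X => by rw [hgx, L.eta_lift]
  have gxx : L.gL L.xi L.xi = 1 := by rw [hgx, L.eta_xi]
  have om_skew : ∀ X Y, gb X (J Y) = - gb Y (J X) := fun X Y => by
    rw [kJskew hK, hK.metric.symm]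
  -- connection
  have nXY : ∀ X Y, nablaM (L.liftV X) (L.liftV Y)
      = L.liftV (nablab X Y) - L.liftF (gb X (J Y)) • L.xi := by
    intro X Y
    apply hnd
    · apply two_cancel_aux
      rw [← hgx, hLC.koszul' hg, eta_sub, L.eta_lift, L.eta_smul, L.eta_xi, glx, glx, L.gL_lift,
        Cm.deriv_zero', Cm.deriv_zero', L.deriv_xi, br_lift_xi, br_lift_xi, hg.zero_left',
        hg.zero_left', hgx, L.bracket_lift, eta_sub, L.eta_lift, L.eta_smul, L.eta_xi]
      ring
    · intro Z
      rw [hLC.koszul' hg]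
      simp only [L.bracket_lift, L.gL_lift, L.deriv_lift, hg.sub_left', hg.smul_left, gxl]
      have := congrArg L.liftF (hK.lc.koszul' hK.metric X Y Z)
      rw [two_lift] at this
      simp only [map_add, map_sub] at this
      linear_combination -this
  have nXx : ∀ X, nablaM (L.liftV X) L.xi = - L.liftV (J X) := by
    intro X
    apply hnd
    · apply two_cancel_aux
      rw [← hgx, hLC.koszul' hg, eta_neg, L.eta_lift, glx, gxx, Cm.deriv_one', Cm.deriv_zero',
        br_lift_xi, hg.zero_left', hg.symm _ (L.liftV X)]
      have : L.gL (L.liftV X) (Cm.bracket L.xi L.xi) = 0 := by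
        have e : Cm.bracket L.xi L.xi = 0 := by
          have e1 := hLC.torsion_free L.xi L.xi
          rw [← e1, sub_self]
        rw [e, hg.zero_right']
      rw [this]; ring
    · intro Z
      rw [hLC.koszul' hg]
      simp only [L.bracket_lift, L.bracket_xi_lift, br_lift_xi, L.gL_lift, L.deriv_lift,
        L.deriv_xi, hg.sub_left', hg.smul_left, gxl, glx, gxx, hg.zero_left', hg.neg_left',
        Cm.deriv_zero']
      rw [kJskew hK, map_neg]; ring
  have nxX : ∀ X, nablaM L.xi (L.liftV X) = - L.liftV (J X) := by
    intro X
    have := hLC.torsion_free L.xi (L.liftV X)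
    rw [L.bracket_xi_lift, sub_eq_zero] at this
    rw [this, nXx]
  have nxx : nablaM L.xi L.xi = 0 := by
    have bxx : Cm.bracket L.xi L.xi = 0 := by
      rw [← hLC.torsion_free, sub_self]
    apply hnd
    · apply two_cancel_aux
      rw [← hgx, ← hgx, hLC.koszul' hg, gxx, Cm.deriv_one', bxx, hg.zero_left']
      ring
    · intro Z
      rw [hLC.koszul' hg, gxx, Cm.deriv_one', bxx, L.bracket_xi_lift, gxl, Cm.deriv_zero',
        hg.zero_left', hg.zero_left']
      ring
  -- curvature
  have cXYZ : ∀ X Y Z W, L.gL (curv Cm nablaM (L.liftV X) (L.liftV Y) (L.liftV Z)) (L.liftV W)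
      = L.liftF (gb (curv Cb nablab X Y Z) W + gb Y (J Z) * gb (J X) W - gb X (J Z) * gb (J Y) W
        - 2 * (gb X (J Y) * gb (J Z) W)) := by
    intro X Y Z W
    unfold curv
    simp only [nXY, nXx, nxX, L.bracket_lift, hLC.sub_left', hLC.sub_right', hLC.leibniz,
      hLC.smul_left, hg.sub_left', hg.add_left, hg.smul_left, hg.neg_left', gxl, L.gL_lift,
      map_add, map_sub, map_mul, map_ofNat, hK.metric.sub_left']
    ring
  have cxYZ : ∀ Y Z, curv Cm nablaM L.xi (L.liftV Y) (L.liftV Z) = L.liftF (gb Y Z) • L.xi := by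
    intro Y Z
    unfold curv
    simp only [nXY, nXx, nxX, nxx, L.bracket_xi_lift, hLC.sub_right', hLC.leibniz,
      hLC.neg_right', hLC.zero_left', L.deriv_xi, hK.parallel, hK.J_sq, hK.metric.neg_right',
      map_neg]
    module
  -- Ricci
  have hric : ∀ W W', ricci Cm nablaM Em L.gL W W' = L.gL (curv Cm nablaM L.xi W W') L.xi
      + ∑ j, L.gL (curv Cm nablaM (L.liftV (Eb j)) W W') (L.liftV (Eb j)) := by
    intro W W'
    unfold ricci
    rw [frame_trace hg hEm.2 hB (fun U => curv Cm nablaM U W W')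
      (fun _ _ => hLC.curv_add1 _ _ _ _) (fun _ _ => hLC.curv_smul1 _ _ _ _), Fin.sum_univ_succ]
    simp [B]
  have ricL : ∀ Y Z, ricci Cm nablaM Em L.gL (L.liftV Y) (L.liftV Z)
      = L.liftF (ricci Cb nablab Eb gb Y Z) - 2 * L.liftF (gb Y Z) := by
    intro Y Z
    have t1 : ∀ A C, ∑ j, gb (Eb j) A * gb C (Eb j) = gb C A := by
      intro A C
      conv_rhs => rw [hEb.2 C]
      rw [hK.metric.sum_left']
      exact Finset.sum_congr rfl fun j _ => by rw [hK.metric.smul_left, mul_comm]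
    have t0 : ∀ A, gb (J A) A = 0 := by
      intro A
      apply two_cancel_aux
      have := om_skew A A
      rw [hK.metric.symm] at this
      linear_combination this
    rw [hric, cxYZ, hg.smul_left, gxx]
    simp only [cXYZ, ← map_sum, t0]
    unfold ricci
    simp only [Finset.sum_add_distrib, Finset.sum_sub_distrib, ← Finset.mul_sum, t1,
      hK.hermitian, mul_zero]
    rw [hK.metric.symm Z Y]
    simp only [map_add, map_sub, map_mul, map_ofNat, Finset.sum_const_zero, map_zero]
    ring
  have ricx : ∀ Z, ricci Cm nablaM Em L.gL L.xi (L.liftV Z) = 0 := by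
    intro Z
    rw [hric]
    have a : curv Cm nablaM L.xi L.xi (L.liftV Z) = 0 := by
      unfold curv
      rw [← hLC.torsion_free, sub_self, sub_self, hLC.zero_left', sub_zero]
    rw [a, hg.zero_left', zero_add]
    refine Finset.sum_eq_zero fun j _ => ?_
    rw [hLC.curv_anti, cxYZ, hg.neg_left', hg.smul_left, gxl]; ring
  have r_add1 : ∀ A A' W, ricci Cm nablaM Em L.gL (A + A') W
      = ricci Cm nablaM Em L.gL A W + ricci Cm nablaM Em L.gL A' W := by
    intro A A' W
    unfold ricci
    simp only [hLC.curv_add2, hg.add_left, Finset.sum_add_distrib]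
  have r_smul1 : ∀ (f : Fm) A W, ricci Cm nablaM Em L.gL (f • A) W
      = f * ricci Cm nablaM Em L.gL A W := by
    intro f A W
    unfold ricci
    simp only [hLC.curv_smul2, hg.smul_left, Finset.mul_sum]
  have r_add2 : ∀ A A' W, ricci Cm nablaM Em L.gL W (A + A')
      = ricci Cm nablaM Em L.gL W A + ricci Cm nablaM Em L.gL W A' := by
    intro A A' W
    unfold ricci
    simp only [hLC.curv_add3, hg.add_left, Finset.sum_add_distrib]
  have r_smul2 : ∀ (f : Fm) A W, ricci Cm nablaM Em L.gL W (f • A)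
      = f * ricci Cm nablaM Em L.gL W A := by
    intro f A W
    unfold ricci
    simp only [hLC.curv_smul3, hg.smul_left, Finset.mul_sum]
  let P : Vm → Vm → Fm := fun W W' => ricci Cm nablaM Em L.gL W (L.phi W')
  have P_add1 : ∀ A A' W, P (A + A') W = P A W + P A' W := fun A A' W => r_add1 _ _ _
  have P_smul1 : ∀ (f : Fm) A W, P (f • A) W = f * P A W := fun f A W => r_smul1 _ _ _
  have P_add2 : ∀ A A' W, P W (A + A') = P W A + P W A' := fun A A' W => by
    simp only [P, L.phi_add, r_add2]
  have P_smul2 : ∀ (f : Fm) A W, P W (f • A) = f * P W A := fun f A W => by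
    simp only [P, L.phi_smul, r_smul2]
  have PL : ∀ X Y, P (L.liftV X) (L.liftV Y)
      = L.liftF (ricci Cb nablab Eb gb X (J Y)) - 2 * L.liftF (gb X (J Y)) := fun X Y => by
    simp only [P, L.phi_lift, ricL]
  have P_0 : ∀ W, P W 0 = 0 := fun W => by
    have := P_smul2 0 0 W
    simpa using this
  have P_0' : ∀ W, P 0 W = 0 := fun W => by
    have := P_smul1 0 0 W
    simpa using this
  have Pxi2 : ∀ W, P W L.xi = 0 := fun W => by
    have := r_smul2 0 0 W
    simp only [P, L.phi_xi]
    simpa using this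
  have Pxi1 : ∀ W, P L.xi W = 0 := fun W => by
    induction hS W using Submodule.span_induction with
    | mem x hx =>
      rcases hx with rfl | ⟨X, rfl⟩
      · exact Pxi2 _
      · simp only [P, L.phi_lift, ricx]
    | zero => exact P_0 _
    | add x y _ _ hx hy => rw [P_add2, hx, hy, add_zero]
    | smul a x _ hx => rw [P_smul2, hx, mul_zero]
  have Pskew : ∀ W W', P W W' = - P W' W := by
    intro W W'
    induction hS W using Submodule.span_induction with
    | mem x hx =>
      rcases hx with rfl | ⟨X, rfl⟩
      · rw [Pxi1, Pxi2, neg_zero]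
      · induction hS W' using Submodule.span_induction with
        | mem y hy =>
          rcases hy with rfl | ⟨Y, rfl⟩
          · rw [Pxi1, Pxi2, neg_zero]
          · rw [PL, PL, krho_skew hK hEb.2, om_skew X Y, map_neg, map_neg]; ring
        | zero => rw [P_0, P_0', neg_zero]
        | add x y _ _ hx hy => rw [P_add1, P_add2, hx, hy]; ring
        | smul a x _ hx => rw [P_smul1, P_smul2, hx]; ring
    | zero => rw [P_0, P_0', neg_zero]
    | add x y _ _ hx hy => rw [P_add1, P_add2, hx, hy]; ring
    | smul a x _ hx => rw [P_smul1, P_smul2, hx]; ring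
  refine ⟨Pskew, ?_, ?_, Pxi1⟩
  · change IsClosedTwoForm Cm P
    have bxx : Cm.bracket L.xi L.xi = 0 := by
      rw [← hLC.torsion_free, sub_self]
    have P_sub1 : ∀ A A' W, P (A - A') W = P A W - P A' W := fun A A' W => by
      have := P_add1 (A - A') A' W
      rw [sub_add_cancel] at this
      linear_combination -this
    have dPxi : ∀ X Y, Cm.deriv L.xi (P (L.liftV X) (L.liftV Y)) = 0 := fun X Y => by
      rw [PL, Cm.deriv_sub', Cm.deriv_two_mul', L.deriv_xi, L.deriv_xi]; ring
    have dPL : ∀ Z X Y, Cm.deriv (L.liftV Z) (P (L.liftV X) (L.liftV Y))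
        = L.liftF (Cb.deriv Z (ricci Cb nablab Eb gb X (J Y)))
          - 2 * L.liftF (Cb.deriv Z (gb X (J Y))) := fun Z X Y => by
      rw [PL, Cm.deriv_sub', Cm.deriv_two_mul', L.deriv_lift, L.deriv_lift]
    refine closed_of_generators Cm P P_add1 P_smul1 Pskew S hS ?_
    intro X hX Y hY Z hZ
    rcases hX with rfl | ⟨X, rfl⟩ <;> rcases hY with rfl | ⟨Y, rfl⟩ <;>
      rcases hZ with rfl | ⟨Z, rfl⟩
    case inr.inr.inr =>
      simp only [dPL, L.bracket_lift, P_sub1, P_smul1, Pxi1]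
      simp only [PL]
      have e1 := congrArg L.liftF (krho_closed hK hEb X Y Z)
      have e2 := congrArg L.liftF (komega_closed hK X Y Z)
      simp only [map_add, map_sub, map_zero] at e1 e2
      linear_combination e1 - 2 * e2
    all_goals
      simp only [dPxi, L.bracket_lift, P_sub1, P_smul1, Pxi1, Pxi2, L.bracket_xi_lift, br_lift_xi,
        bxx, P_0', Cm.deriv_zero']
      try ring
  · intro X Y
    exact PL X Y
end
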